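/- For all integers k ≥ 1, R ≥ 1 and n with (k−1)R < n < kR, the matrix integral I_k(n;R) equals the binomial coefficient C(kR − n + k² − 1, k² − 1). -/

import Mathlib

open MeasureTheory Polynomial

noncomputable instance (R : ℕ) : MeasurableSpace (Matrix.unitaryGroup (Fin R) ℂ) := borel _
instance (R : ℕ) : BorelSpace (Matrix.unitaryGroup (Fin R) ℂ) := ⟨rfl⟩

/-- The trace of the `j`-th exterior power of `θ`, i.e. the coefficient of `T^j` in
`det(I + T·θ)`. -/
noncomputable def extPowTrace (R : ℕ) (θ : Matrix.unitaryGroup (Fin R) ℂ) (j : ℕ) : ℂ :=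
  ((1 + (X : ℂ[X]) • (θ : Matrix (Fin R) (Fin R) ℂ).map C).det).coeff j

/-- The matrix integral `I_k(n;R)`: the integral over the unitary group `U(R)` of
`|∑_{n₁+⋯+n_k=n} ∏ᵢ Tr(Λ^{nᵢ} θ)|²`, with respect to the measure `μ` (which in the
theorems below is assumed to be the Haar probability measure). The summands with some
`nᵢ > R` vanish, since `det(I + T·θ)` has degree `R`. -/
noncomputable def matrixIntegral (k n R : ℕ)
    (μ : Measure (Matrix.unitaryGroup (Fin R) ℂ)) : ℝ :=
  ∫ θ, ‖∑ x ∈ Finset.Nat.antidiagonalTuple k n, ∏ i, extPowTrace R θ (x i)‖ ^ 2 ∂μ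


open Equiv

lemma exists_perm_eq_comp {α β : Type*} [Fintype α] [DecidableEq β] (f g : α → β)
    (h : ∀ b, Fintype.card {a // f a = b} = Fintype.card {a // g a = b}) :
    ∃ σ : Perm α, f = g ∘ σ := by
  let e : ∀ b, {a // f a = b} ≃ {a // g a = b} := fun b => Fintype.equivOfCardEq (h b)
  refine ⟨(Equiv.sigmaFiberEquiv f).symm.trans
    ((Equiv.sigmaCongrRight e).trans (Equiv.sigmaFiberEquiv g)), ?_⟩
  ext a
  exact ((e (f a)) ⟨a, rfl⟩).2.symm

lemma map_univ_eq_iff_exists_perm {α β : Type*} [Fintype α] [DecidableEq β] (f g : α → β) :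
    Finset.univ.val.map f = Finset.univ.val.map g ↔ ∃ σ : Perm α, f = g ∘ σ := by
  constructor
  · intro h
    refine exists_perm_eq_comp f g fun b => ?_
    have hb := congrArg (Multiset.count b) h
    simp only [Multiset.count_map] at hb
    rw [Fintype.card_subtype, Fintype.card_subtype, Finset.card_def, Finset.card_def]
    simpa [eq_comm] using hb
  · rintro ⟨σ, rfl⟩
    rw [← Multiset.map_map]
    congr 1
    exact congrArg Finset.val (Finset.map_univ_equiv σ)

/-- Counting orbits of `Perm (Fin m)` on `Fin m → K` (multisets of size `m`) with Burnside's
lemma. -/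
lemma sum_card_comp_perm_eq (K : Type*) [Fintype K] [DecidableEq K] (m : ℕ) :
    ∑ σ : Perm (Fin m), Fintype.card {f : Fin m → K // f ∘ σ = f} =
      (Fintype.card K + m - 1).choose m * m.factorial := by
  classical
  let G := (Perm (Fin m))ᵈᵐᵃ
  let Ω := Quotient (MulAction.orbitRel G (Fin m → K))
  have e : Ω ≃ Sym K m := by
    refine Equiv.ofBijective (Quotient.lift
      (fun f : Fin m → K => (⟨Finset.univ.val.map f, by simp⟩ : Sym K m)) ?_) ⟨?_, ?_⟩
    · rintro f g ⟨σ, rfl⟩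
      refine Subtype.ext ((map_univ_eq_iff_exists_perm _ _).2 ⟨DomMulAct.mk.symm σ, ?_⟩)
      rfl
    · rintro ⟨f⟩ ⟨g⟩ h
      obtain ⟨σ, hσ⟩ := (map_univ_eq_iff_exists_perm f g).1 (Subtype.ext_iff.1 h)
      exact Quotient.sound ⟨DomMulAct.mk σ, hσ.symm⟩
    · rintro ⟨s, hs⟩
      induction s using Quotient.inductionOn with
      | h l =>
        subst hs
        refine ⟨Quotient.mk _ l.get, Subtype.ext ?_⟩
        change Multiset.map l.get Finset.univ.val = (l : Multiset K)
        rw [Fin.univ_val_map]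
        simp
  have : Fintype G := Fintype.ofEquiv _ DomMulAct.mk
  have : Fintype Ω := Fintype.ofEquiv _ e.symm
  have h := MulAction.sum_card_fixedBy_eq_card_orbits_mul_card_group G (Fin m → K)
  rw [Fintype.card_congr e, Sym.card_sym_eq_choose] at h
  rw [show Fintype.card G = m.factorial by
    rw [← Fintype.card_congr DomMulAct.mk, Fintype.card_perm, Fintype.card_fin]] at h
  rw [← h]
  exact Fintype.sum_equiv DomMulAct.mk _ _ fun σ => Fintype.card_congr (Equiv.refl _)

lemma coeff_pow_eq_sum_antidiagonalTuple (p : ℂ[X]) (k n : ℕ) :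
    (p ^ k).coeff n = ∑ x ∈ Finset.Nat.antidiagonalTuple k n, ∏ i, p.coeff (x i) := by
  have h := PowerSeries.coeff_prod (fun _ : Fin k => (p : PowerSeries ℂ)) n Finset.univ
  rw [Finset.prod_const, Finset.card_univ, Fintype.card_fin, ← Polynomial.coe_pow,
    Polynomial.coeff_coe] at h
  rw [h]
  refine Finset.sum_bij (fun l _ => (l : Fin k → ℕ)) ?_ ?_ ?_ ?_
  · intro l hl
    simpa [Finset.Nat.mem_antidiagonalTuple] using hl
  · intro a _ b _ hab
    exact DFunLike.coe_injective hab
  · intro x hx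
    refine ⟨Finsupp.equivFunOnFinite.symm x, ?_, rfl⟩
    simpa [Finset.Nat.mem_antidiagonalTuple] using hx
  · intro l _
    simp

/-- Summing over all tuples counts each principal minor of size `m` exactly `m!` times. -/
lemma sum_det_submatrix {N : Type*} [Fintype N] [DecidableEq N] (M : Matrix N N ℂ) (m : ℕ) :
    ∑ φ : Fin m → N, (M.submatrix φ φ).det =
      m.factorial * (Matrix.det (1 + (X : ℂ[X]) • M.map C)).coeff m := by
  rw [Matrix.coeff_det_one_add_X_smul_eq_sum_minors, Finset.mul_sum]
  have h0 : ∑ φ : Fin m → N, (M.submatrix φ φ).det =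
      ∑ φ : Fin m → N with Function.Injective φ, (M.submatrix φ φ).det := by
    rw [Finset.sum_filter]
    refine Finset.sum_congr rfl fun φ _ => ?_
    split_ifs with h
    · rfl
    · simp only [Function.Injective, not_forall] at h
      obtain ⟨a, b, hab, hne⟩ := h
      exact Matrix.det_zero_of_row_eq hne (by ext j; simp [hab])
  rw [h0, ← Finset.sum_fiberwise_of_maps_to (t := Finset.univ.powersetCard m)
    (g := fun φ : Fin m → N => Finset.univ.image φ)]
  · refine Finset.sum_congr rfl fun s hs => ?_
    have hs' : s.card = m := (Finset.mem_powersetCard.1 hs).2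
    have key : ∀ φ ∈ (Finset.univ.filter fun φ : Fin m → N => Function.Injective φ).filter
        (fun φ => Finset.univ.image φ = s), (M.submatrix φ φ).det =
          (M.submatrix (Subtype.val : s → N) (Subtype.val : s → N)).det := by
      intro φ hφ
      simp only [Finset.mem_filter, Finset.mem_univ, true_and] at hφ
      obtain ⟨hi, him⟩ := hφ
      let e : Fin m ≃ s := Equiv.ofBijective
        (fun a => ⟨φ a, him ▸ Finset.mem_image_of_mem _ (Finset.mem_univ a)⟩)
        ⟨fun a b h => hi (Subtype.ext_iff.1 h), fun ⟨x, hx⟩ => by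
          rw [← him] at hx
          obtain ⟨a, _, rfl⟩ := Finset.mem_image.1 hx
          exact ⟨a, rfl⟩⟩
      rw [← Matrix.det_submatrix_equiv_self e]
      rfl
    rw [Finset.sum_congr rfl key, Finset.sum_const, nsmul_eq_mul]
    congr 2
    have : Fintype.card (Fin m ≃ s) = m.factorial := by
      rw [Fintype.card_equiv (Fintype.equivOfCardEq (by simp [hs'])), Fintype.card_fin]
    rw [← this, ← Finset.card_univ]
    symm
    refine Finset.card_bij (fun e _ => fun a => (e a : N)) ?_ ?_ ?_
    · intro e _
      simp only [Finset.mem_filter, Finset.mem_univ, true_and]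
      refine ⟨Subtype.val_injective.comp e.injective, ?_⟩
      ext x
      simp only [Finset.mem_image, Finset.mem_univ, true_and]
      exact ⟨fun ⟨a, ha⟩ => ha ▸ (e a).2, fun hx => ⟨e.symm ⟨x, hx⟩, by simp⟩⟩
    · intro e _ e' _ h
      ext a
      exact congrFun h a
    · intro φ hφ
      simp only [Finset.mem_filter, Finset.mem_univ, true_and] at hφ
      obtain ⟨hi, him⟩ := hφ
      exact ⟨Equiv.ofBijective
        (fun a => ⟨φ a, him ▸ Finset.mem_image_of_mem _ (Finset.mem_univ a)⟩)
        ⟨fun a b h => hi (Subtype.ext_iff.1 h), fun ⟨x, hx⟩ => by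
          rw [← him] at hx
          obtain ⟨a, _, rfl⟩ := Finset.mem_image.1 hx
          exact ⟨a, rfl⟩⟩, Finset.mem_univ _, rfl⟩
  · intro φ hφ
    simp only [Finset.mem_filter, Finset.mem_univ, true_and] at hφ
    simp [Finset.mem_powersetCard, Finset.card_image_of_injective _ hφ]

/-- The product of the power sums `Tr (θ ^ ℓ)` over the cycle lengths `ℓ` of `σ`, written as the
trace of `σ` composed with the `m`-th tensor power of `θ`. -/
noncomputable def permTrace {R m : ℕ} (σ : Perm (Fin m)) (θ : Matrix (Fin R) (Fin R) ℂ) : ℂ :=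
  ∑ i : Fin m → Fin R, ∏ a, θ (i (σ a)) (i a)

lemma factorial_mul_coeff_det_pow {R : ℕ} (θ : Matrix (Fin R) (Fin R) ℂ) (k m : ℕ) :
    m.factorial * ((Matrix.det (1 + (X : ℂ[X]) • θ.map C)) ^ k).coeff m =
      ∑ σ : Perm (Fin m), ((Perm.sign σ : ℤ) : ℂ) *
        (Fintype.card {f : Fin m → Fin k // f ∘ σ = f} * permTrace σ θ) := by
  have hdet : (Matrix.det (1 + (X : ℂ[X]) • θ.map C)) ^ k =
      Matrix.det (1 + (X : ℂ[X]) • (Matrix.blockDiagonal fun _ : Fin k => θ).map C) := by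
    have : (1 + (X : ℂ[X]) • (Matrix.blockDiagonal fun _ : Fin k => θ).map C) =
        Matrix.blockDiagonal fun _ : Fin k => (1 + (X : ℂ[X]) • θ.map C) := by
      rw [Matrix.blockDiagonal_map _ _ (map_zero C)]
      ext ⟨i, c⟩ ⟨j, d⟩
      by_cases h : c = d
      · subst h
        simp [Matrix.blockDiagonal_apply, Matrix.one_apply]
      · simp [Matrix.blockDiagonal_apply, h]
    rw [this, Matrix.det_blockDiagonal]
    simp
  rw [hdet, ← sum_det_submatrix]
  simp only [Matrix.det_apply', Matrix.submatrix_apply]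
  rw [Finset.sum_comm]
  refine Finset.sum_congr rfl fun σ _ => ?_
  rw [← Finset.mul_sum]
  congr 1
  obtain ⟨P, hP⟩ : ∃ P : (Fin m → Fin R) → ℂ, P = fun i => ∏ a, θ (i (σ a)) (i a) := ⟨_, rfl⟩
  have hperm : permTrace σ θ = ∑ i, P i := by rw [hP]; rfl
  have hsum : ∑ q : (Fin m → Fin k) × (Fin m → Fin R), (if q.1 ∘ σ = q.1 then 1 else 0) * P q.2 =
      Fintype.card {f : Fin m → Fin k // f ∘ σ = f} * permTrace σ θ := by
    rw [Fintype.sum_prod_type, hperm, Fintype.card_subtype, ← Finset.sum_boole,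
      Finset.sum_mul_sum]
  rw [← hsum]
  refine (Fintype.sum_equiv ((Equiv.arrowProdEquivProdArrow (Fin m) (fun _ => Fin R)
    (fun _ => Fin k)).trans (Equiv.prodComm _ _)).symm _ _ ?_).symm
  rintro ⟨f, i⟩
  rw [hP]
  simp only [Equiv.symm_trans_apply, Equiv.prodComm_symm, Equiv.prodComm_apply, Prod.swap_prod_mk]
  change _ = ∏ a, Matrix.blockDiagonal (fun _ => θ) (i (σ a), f (σ a)) (i a, f a)
  simp only [Matrix.blockDiagonal_apply]
  split_ifs with h
  · rw [one_mul]
    refine Finset.prod_congr rfl fun a _ => ?_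
    exact (if_pos (congrFun h a)).symm
  · rw [zero_mul]
    obtain ⟨a, ha⟩ := Function.ne_iff.1 h
    exact (Finset.prod_eq_zero (Finset.mem_univ a) (if_neg ha)).symm

/-- The functional equation of `det (1 + X θ)` for unitary `θ`. -/
lemma det_one_add_eq_reflect {R : ℕ} (θ : Matrix.unitaryGroup (Fin R) ℂ) :
    Matrix.det (1 + (X : ℂ[X]) • (θ : Matrix (Fin R) (Fin R) ℂ).map C) =
      C (θ : Matrix (Fin R) (Fin R) ℂ).det * ((Matrix.det (1 + (X : ℂ[X]) •
        (θ : Matrix (Fin R) (Fin R) ℂ).map C)).map (starRingEnd ℂ)).reflect R := by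
  have h1 : (Matrix.det (1 + (X : ℂ[X]) •
        (θ : Matrix (Fin R) (Fin R) ℂ).map C)).map (starRingEnd ℂ) =
      (-(star (θ : Matrix (Fin R) (Fin R) ℂ))).charpoly.reverse := by
    rw [Matrix.reverse_charpoly, Matrix.charpolyRev, ← Polynomial.coe_mapRingHom,
      RingHom.map_det, ← Matrix.det_transpose]
    congr 1
    ext i j
    by_cases h : i = j
    · subst h; simp [Matrix.star_apply]
    · simp [Matrix.star_apply, h, Ne.symm h]
  rw [h1, Polynomial.reverse, Matrix.charpoly_natDegree_eq_dim, Fintype.card_fin,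
    Polynomial.reflect_reflect, Matrix.charpoly, RingHom.map_det, ← Matrix.det_mul]
  congr 1
  have h2 : (θ : Matrix (Fin R) (Fin R) ℂ) * star (θ : Matrix (Fin R) (Fin R) ℂ) = 1 :=
    Matrix.mem_unitaryGroup_iff.1 θ.2
  have h3 : (C : ℂ →+* ℂ[X]).mapMatrix (θ : Matrix (Fin R) (Fin R) ℂ) *
      (C : ℂ →+* ℂ[X]).mapMatrix (star (θ : Matrix (Fin R) (Fin R) ℂ)) = 1 := by
    rw [← map_mul, h2, map_one]
  rw [Matrix.charmatrix, map_neg, sub_neg_eq_add, mul_add, h3, add_comm]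
  congr 1
  ext i j
  rw [Matrix.scalar_apply, Matrix.mul_diagonal, Matrix.smul_apply, smul_eq_mul, mul_comm]
  rfl

lemma natDegree_det_one_add_le {R : ℕ} (θ : Matrix (Fin R) (Fin R) ℂ) :
    (Matrix.det (1 + (X : ℂ[X]) • θ.map C)).natDegree ≤ R := by
  have h : Matrix.det (1 + (X : ℂ[X]) • θ.map C) = (-θ).charpoly.reverse := by
    rw [Matrix.reverse_charpoly, Matrix.charpolyRev]
    congr 1
    ext i j
    simp
  rw [h]
  refine (Polynomial.reverse_natDegree_le _).trans ?_
  simp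

lemma reflect_pow {p : ℂ[X]} {N : ℕ} (hp : p.natDegree ≤ N) (k : ℕ) :
    (p ^ k).reflect (k * N) = (p.reflect N) ^ k := by
  induction k with
  | zero => simp
  | succ k ih =>
    rw [pow_succ, pow_succ, ← ih, Nat.succ_mul,
      Polynomial.reflect_mul _ _ (Polynomial.natDegree_pow_le_of_le k hp) hp]

lemma norm_coeff_det_pow_eq {R : ℕ} (θ : Matrix.unitaryGroup (Fin R) ℂ) {k n : ℕ}
    (hn : n ≤ k * R) :
    ‖((Matrix.det (1 + (X : ℂ[X]) • (θ : Matrix (Fin R) (Fin R) ℂ).map C)) ^ k).coeff n‖ =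
      ‖((Matrix.det (1 + (X : ℂ[X]) • (θ : Matrix (Fin R) (Fin R) ℂ).map C)) ^ k).coeff
        (k * R - n)‖ := by
  have hdet : ‖(θ : Matrix (Fin R) (Fin R) ℂ).det‖ = 1 :=
    CStarRing.norm_of_mem_unitary (Matrix.det_of_mem_unitary θ.2)
  conv_lhs => rw [det_one_add_eq_reflect θ]
  rw [mul_pow, ← reflect_pow ((Polynomial.natDegree_map_le).trans (natDegree_det_one_add_le _)),
    ← C_pow, Polynomial.coeff_C_mul, Polynomial.coeff_reflect, Polynomial.revAt_le hn,
    ← Polynomial.map_pow, Polynomial.coeff_map, norm_mul, norm_pow, hdet, one_pow, one_mul,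
    RCLike.norm_conj]

/-- The `m`-th tensor power of a matrix, in the standard basis. -/
def tensorPow {R : ℕ} (m : ℕ) (g : Matrix (Fin R) (Fin R) ℂ) :
    Matrix (Fin m → Fin R) (Fin m → Fin R) ℂ :=
  Matrix.of fun I J => ∏ a, g (I a) (J a)

lemma tensorPow_mul {R m : ℕ} (g h : Matrix (Fin R) (Fin R) ℂ) :
    tensorPow m (g * h) = tensorPow m g * tensorPow m h := by
  ext I J
  simp only [tensorPow, Matrix.of_apply, Matrix.mul_apply, Finset.prod_univ_sum,
    Fintype.piFinset_univ, Finset.prod_mul_distrib]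

lemma tensorPow_one {R m : ℕ} : tensorPow m (1 : Matrix (Fin R) (Fin R) ℂ) = 1 := by
  ext I J
  simp only [tensorPow, Matrix.of_apply, Matrix.one_apply]
  rw [Finset.prod_ite_zero]
  simp [funext_iff]

lemma tensorPow_conjTranspose {R m : ℕ} (g : Matrix (Fin R) (Fin R) ℂ) :
    tensorPow m g.conjTranspose = (tensorPow m g).conjTranspose := by
  ext I J
  simp [tensorPow]

lemma tensorPow_diagonal {R m : ℕ} (d : Fin R → ℂ) :
    tensorPow m (Matrix.diagonal d) = Matrix.diagonal fun I => ∏ a, d (I a) := by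
  ext I J
  by_cases h : I = J
  · subst h; simp [tensorPow]
  · obtain ⟨a, ha⟩ := Function.ne_iff.1 h
    rw [Matrix.diagonal_apply_ne _ h]
    exact Finset.prod_eq_zero (Finset.mem_univ a) (Matrix.diagonal_apply_ne _ ha)

/-- An operator commuting with the unitary matrices preserves weights. -/
lemma exists_perm_of_commute_diagonal {R m : ℕ}
    {B : Matrix (Fin m → Fin R) (Fin m → Fin R) ℂ}
    (hB : ∀ u ∈ Matrix.unitaryGroup (Fin R) ℂ, tensorPow m u * B = B * tensorPow m u)
    {I K : Fin m → Fin R} (h : B I K ≠ 0) : ∃ π : Perm (Fin m), I = K ∘ π := by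
  refine exists_perm_eq_comp I K fun j => ?_
  let ζ : ℂ := Complex.exp (2 * Real.pi * Complex.I / ((m + 1 : ℕ) : ℂ))
  have hζ : IsPrimitiveRoot ζ (m + 1) := Complex.isPrimitiveRoot_exp _ (Nat.succ_ne_zero m)
  have hnorm : ‖ζ‖ = 1 := hζ.norm'_eq_one (Nat.succ_ne_zero m)
  let d : Fin R → ℂ := fun i => if i = j then ζ else 1
  have hd : Matrix.diagonal d ∈ Matrix.unitaryGroup (Fin R) ℂ := by
    rw [Matrix.mem_unitaryGroup_iff, Matrix.star_eq_conjTranspose,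
      Matrix.diagonal_conjTranspose, Matrix.diagonal_mul_diagonal, ← Matrix.diagonal_one]
    congr 1
    ext i
    by_cases hi : i = j
    · simp [d, hi, Complex.mul_conj, Complex.normSq_eq_norm_sq, hnorm]
    · simp [d, hi]
  have h1 := congrFun (congrFun (hB _ hd) I) K
  rw [tensorPow_diagonal, Matrix.diagonal_mul, Matrix.mul_diagonal, mul_comm] at h1
  have h2 := mul_left_cancel₀ h h1
  have h3 : ∀ F : Fin m → Fin R, ∏ a, d (F a) = ζ ^ Fintype.card {a // F a = j} := by
    intro F
    simp only [d]
    rw [Finset.prod_ite, Finset.prod_const, Finset.prod_const_one, mul_one, Fintype.card_subtype]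
  rw [h3, h3] at h2
  have hlt : ∀ F : Fin m → Fin R, Fintype.card {a // F a = j} < m + 1 := fun F =>
    Nat.lt_succ_of_le ((Fintype.card_subtype_le _).trans (by simp))
  exact hζ.pow_inj (hlt I) (hlt K) h2

/-- The matrix sending the basis vector `e j` to `e (f j)` is a diagonal matrix times a unitary. -/
lemma exists_diagonal_mul_unitary {R : ℕ} (f : Fin R → Fin R) :
    ∃ d : Fin R → ℂ, ∃ u ∈ Matrix.unitaryGroup (Fin R) ℂ,
      Matrix.diagonal d * u = Matrix.of fun i j => if i = f j then (1 : ℂ) else 0 := by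
  classical
  let c : Fin R → ℝ := fun i => Real.sqrt (Fintype.card {j // f j = i})
  let s : Set (Fin R) := Set.range f
  let v : Fin R → EuclideanSpace ℂ (Fin R) := fun i =>
    WithLp.toLp 2 fun j => if i = f j then ((c i)⁻¹ : ℂ) else 0
  have hc : ∀ i ∈ s, c i ≠ 0 := by
    rintro _ ⟨j, rfl⟩
    have : 0 < Fintype.card {j' // f j' = f j} := Fintype.card_pos_iff.2 ⟨⟨j, rfl⟩⟩
    exact (Real.sqrt_pos.2 (by exact_mod_cast this)).ne'
  have hv : Orthonormal ℂ (s.domRestrict v) := by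
    rw [orthonormal_iff_ite]
    rintro ⟨i, hi⟩ ⟨i', hi'⟩
    simp only [Set.domRestrict, PiLp.inner_apply, v, RCLike.inner_apply]
    split_ifs with h
    · obtain rfl : i = i' := Subtype.ext_iff.1 h
      have hne : (c i : ℂ) ≠ 0 := by exact_mod_cast hc i hi
      have hsq : (c i : ℂ) * c i = Fintype.card {j // f j = i} := by
        have := Real.mul_self_sqrt (Nat.cast_nonneg (α := ℝ) (Fintype.card {j // f j = i}))
        exact_mod_cast congrArg (Complex.ofReal) this
      have : ∀ j, ((if i = f j then ((c i)⁻¹ : ℂ) else 0) *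
          (starRingEnd ℂ) (if i = f j then ((c i)⁻¹ : ℂ) else 0)) =
          if i = f j then ((c i : ℂ) * c i)⁻¹ else 0 := by
        intro j; split_ifs <;> simp
      simp only [this]
      rw [← Finset.sum_filter, Finset.sum_const, nsmul_eq_mul, hsq, Fintype.card_subtype]
      have e : (Finset.univ.filter fun j => i = f j) = Finset.univ.filter fun j => f j = i := by
        ext; simp [eq_comm]
      rw [e, ← Fintype.card_subtype, ← hsq]
      field_simp
    · have hne : i ≠ i' := fun hh => h (Subtype.ext hh)
      refine Finset.sum_eq_zero fun j _ => ?_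
      by_cases h1 : i = f j
      · have : i' ≠ f j := fun hh => hne (h1.trans hh.symm)
        simp [this]
      · simp [h1]
  obtain ⟨b, hb⟩ := hv.exists_orthonormalBasis_extension_of_card_eq (by simp)
  refine ⟨fun i => c i, Matrix.of fun i j => b i j, ?_, ?_⟩
  · rw [Matrix.mem_unitaryGroup_iff]
    ext i i'
    have := orthonormal_iff_ite.1 b.orthonormal i' i
    simp only [PiLp.inner_apply, RCLike.inner_apply] at this
    simp only [Matrix.mul_apply, Matrix.star_apply, Matrix.of_apply, Matrix.one_apply]
    simpa [eq_comm] using this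
  · ext i j
    rw [Matrix.diagonal_mul, Matrix.of_apply, Matrix.of_apply]
    by_cases hi : i ∈ s
    · rw [hb i hi]
      have hne : (c i : ℂ) ≠ 0 := by exact_mod_cast hc i hi
      simp only [v]
      split_ifs <;> simp [hne]
    · have h0 : c i = 0 := by
        simp only [c]
        rw [Fintype.card_eq_zero_iff.2 ⟨fun x => hi ⟨x.1, x.2⟩⟩]
        simp
      rw [h0, if_neg fun h => hi ⟨j, h.symm⟩]
      simp

/-- For `m ≤ R`, an operator commuting with the `m`-th tensor powers of all unitary `R × R`
matrices is a linear combination of permutations of the tensor factors. -/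
lemma commutant_apply {R m : ℕ} (hm : m ≤ R) {B : Matrix (Fin m → Fin R) (Fin m → Fin R) ℂ}
    (hB : ∀ u ∈ Matrix.unitaryGroup (Fin R) ℂ, tensorPow m u * B = B * tensorPow m u)
    (I K : Fin m → Fin R) :
    B I K = ∑ π : Perm (Fin m),
      if I = K ∘ π then B (Fin.castLE hm ∘ π) (Fin.castLE hm) else 0 := by
  classical
  have hinj : Function.Injective (Fin.castLE hm) := Fin.castLE_injective hm
  let f : Fin R → Fin R := fun j => if h : (j : ℕ) < m then K ⟨j, h⟩ else j
  have hf : ∀ a, f (Fin.castLE hm a) = K a := fun a => by simp [f]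
  obtain ⟨d, u, hu, hdu⟩ := exists_diagonal_mul_unitary f
  have hD : tensorPow m (Matrix.diagonal d) * B = B * tensorPow m (Matrix.diagonal d) := by
    rw [tensorPow_diagonal]
    ext I' K'
    rw [Matrix.diagonal_mul, Matrix.mul_diagonal, mul_comm]
    by_cases h : B I' K' = 0
    · simp [h]
    · obtain ⟨π, rfl⟩ := exists_perm_of_commute_diagonal hB h
      congr 1
      exact Equiv.prod_comp π fun a => d (K' a)
  have hg : tensorPow m (Matrix.of fun i j => if i = f j then (1 : ℂ) else 0) * B =
      B * tensorPow m (Matrix.of fun i j => if i = f j then (1 : ℂ) else 0) := by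
    rw [← hdu, tensorPow_mul, Matrix.mul_assoc, hB u hu, ← Matrix.mul_assoc, hD, Matrix.mul_assoc]
  have hT : ∀ I' J' : Fin m → Fin R,
      tensorPow m (Matrix.of fun i j => if i = f j then (1 : ℂ) else 0) I' J' =
        if I' = f ∘ J' then 1 else 0 := by
    intro I' J'
    simp only [tensorPow, Matrix.of_apply]
    rw [Finset.prod_ite_zero]
    simp [funext_iff]
  have hcomp : f ∘ Fin.castLE hm = K := funext hf
  have hι := congrFun (congrFun hg I) (Fin.castLE hm)
  simp only [Matrix.mul_apply, hT, hcomp] at hι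
  have hR : ∑ j, B I j * (if j = K then 1 else 0) = B I K := by simp
  rw [hR] at hι
  rw [← hι]
  symm
  have : ∀ π : Perm (Fin m),
      (if I = K ∘ π then B (Fin.castLE hm ∘ π) (Fin.castLE hm) else 0) =
      (fun M : Fin m → Fin R => (if I = f ∘ M then 1 else 0) * B M (Fin.castLE hm))
        (Fin.castLE hm ∘ π) := by
    intro π
    simp only [← Function.comp_assoc, hcomp]
    split_ifs <;> simp
  simp only [this]
  rw [← Finset.sum_image (s := Finset.univ) (g := fun π : Perm (Fin m) => Fin.castLE hm ∘ π)
    (f := fun M : Fin m → Fin R => (if I = f ∘ M then 1 else 0) * B M (Fin.castLE hm))]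
  · refine Finset.sum_subset (Finset.subset_univ _) fun M _ hM => ?_
    have : B M (Fin.castLE hm) = 0 := by
      by_contra h
      obtain ⟨π, hπ⟩ := exists_perm_of_commute_diagonal hB h
      exact hM (Finset.mem_image.2 ⟨π, Finset.mem_univ _, hπ.symm⟩)
    rw [this, mul_zero]
  · intro π _ π' _ h
    ext a
    exact congrArg Fin.val (hinj (congrFun h a))

section Haar

variable {R m : ℕ} (μ : Measure (Matrix.unitaryGroup (Fin R) ℂ)) [IsProbabilityMeasure μ]

/-- A matrix coefficient of the `m`-th tensor power of `θ` times the conjugate of another. -/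
noncomputable def tensorCoeff (I J K L : Fin m → Fin R) (θ : Matrix.unitaryGroup (Fin R) ℂ) : ℂ :=
  tensorPow m (θ : Matrix (Fin R) (Fin R) ℂ) I J *
    starRingEnd ℂ (tensorPow m (θ : Matrix (Fin R) (Fin R) ℂ) K L)

lemma integrable_tensorCoeff (I J K L : Fin m → Fin R) :
    Integrable (tensorCoeff I J K L) μ := by
  have hbound : ∀ (θ : Matrix.unitaryGroup (Fin R) ℂ) (I J : Fin m → Fin R),
      ‖tensorPow m (θ : Matrix (Fin R) (Fin R) ℂ) I J‖ ≤ 1 := by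
    intro θ I J
    simp only [tensorPow, Matrix.of_apply, norm_prod]
    exact Finset.prod_le_one (fun _ _ => norm_nonneg _)
      fun a _ => entry_norm_bound_of_unitary θ.2 _ _
  have hcont : Continuous (tensorCoeff I J K L) := by
    unfold tensorCoeff tensorPow
    simp only [Matrix.of_apply]
    have h : ∀ i j, Continuous fun θ : Matrix.unitaryGroup (Fin R) ℂ =>
        (θ : Matrix (Fin R) (Fin R) ℂ) i j := fun i j =>
      continuous_subtype_val.matrix_elem i j
    exact (continuous_finsetProd _ fun a _ => h _ _).mul
      (Complex.continuous_conj.comp (continuous_finsetProd _ fun a _ => h _ _))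
  refine Integrable.of_bound hcont.aestronglyMeasurable 1 (Filter.Eventually.of_forall fun θ => ?_)
  rw [tensorCoeff, norm_mul, RCLike.norm_conj]
  exact mul_le_one₀ (hbound _ _ _) (norm_nonneg _) (hbound _ _ _)

lemma integral_tensorCoeff_commute [μ.IsMulLeftInvariant] (J L : Fin m → Fin R)
    {u : Matrix (Fin R) (Fin R) ℂ} (hu : u ∈ Matrix.unitaryGroup (Fin R) ℂ) :
    tensorPow m u * Matrix.of (fun I K => ∫ θ, tensorCoeff I J K L θ ∂μ) =
      Matrix.of (fun I K => ∫ θ, tensorCoeff I J K L θ ∂μ) * tensorPow m u := by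
  set B : Matrix (Fin m → Fin R) (Fin m → Fin R) ℂ :=
    Matrix.of (fun I K => ∫ θ, tensorCoeff I J K L θ ∂μ) with hBdef
  have hinv : tensorPow m u * B * (tensorPow m u).conjTranspose = B := by
    ext I K
    have h := integral_mul_left_eq_self (μ := μ) (tensorCoeff I J K L) ⟨u, hu⟩
    change _ = ∫ θ, tensorCoeff I J K L θ ∂μ
    rw [← h]
    have hexp : ∀ θ : Matrix.unitaryGroup (Fin R) ℂ,
        tensorCoeff I J K L ((⟨u, hu⟩ : Matrix.unitaryGroup (Fin R) ℂ) * θ) =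
        ∑ N, ∑ M, tensorPow m u I M * tensorCoeff M J N L θ *
          starRingEnd ℂ (tensorPow m u K N) := by
      intro θ
      simp only [tensorCoeff, Submonoid.coe_mul, tensorPow_mul, Matrix.mul_apply, map_sum, map_mul]
      rw [Finset.sum_mul_sum, Finset.sum_comm]
      refine Finset.sum_congr rfl fun N _ => Finset.sum_congr rfl fun M _ => ?_
      ring
    simp only [hexp]
    have hint : ∀ M N, Integrable (fun θ => tensorPow m u I M * tensorCoeff M J N L θ *
          starRingEnd ℂ (tensorPow m u K N)) μ := fun M N =>
      ((integrable_tensorCoeff μ M J N L).const_mul _).mul_const _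
    rw [integral_finsetSum _ fun N _ => integrable_finsetSum _ fun M _ => hint M N]
    simp only [Matrix.mul_apply, Finset.sum_mul]
    refine Finset.sum_congr rfl fun N _ => ?_
    rw [integral_finsetSum _ fun M _ => hint M N]
    refine Finset.sum_congr rfl fun M _ => ?_
    rw [integral_mul_const, integral_const_mul]
    rfl
  have hunit : (tensorPow m u).conjTranspose * tensorPow m u = 1 := by
    rw [← tensorPow_conjTranspose, ← tensorPow_mul, ← Matrix.star_eq_conjTranspose,
      Matrix.mem_unitaryGroup_iff'.1 hu, tensorPow_one]
  calc tensorPow m u * B = tensorPow m u * B * ((tensorPow m u).conjTranspose * tensorPow m u) := by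
        rw [hunit, Matrix.mul_one]
    _ = B * tensorPow m u := by rw [← Matrix.mul_assoc, hinv]

lemma tensorPow_comp_perm (g : Matrix (Fin R) (Fin R) ℂ) (I J : Fin m → Fin R)
    (π : Perm (Fin m)) : tensorPow m g (I ∘ π) (J ∘ π) = tensorPow m g I J :=
  Equiv.prod_comp π fun a => g (I a) (J a)

lemma sum_tensorCoeff (θ : Matrix.unitaryGroup (Fin R) ℂ) {ι : Fin m → Fin R}
    (hι : Function.Injective ι) (ρ τ : Perm (Fin m)) :
    ∑ K : Fin m → Fin R, tensorCoeff (ι ∘ ρ) K (ι ∘ τ) K θ = if ρ = τ then 1 else 0 := by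
  have hθ : tensorPow m (θ : Matrix (Fin R) (Fin R) ℂ) *
      (tensorPow m (θ : Matrix (Fin R) (Fin R) ℂ)).conjTranspose = 1 := by
    rw [← tensorPow_conjTranspose, ← tensorPow_mul, ← Matrix.star_eq_conjTranspose,
      Matrix.mem_unitaryGroup_iff.1 θ.2, tensorPow_one]
  have h := congrFun (congrFun hθ (ι ∘ ρ)) (ι ∘ τ)
  rw [Matrix.mul_apply, Matrix.one_apply] at h
  have hiff : ι ∘ ρ = ι ∘ τ ↔ ρ = τ :=
    ⟨fun h => Equiv.ext fun a => hι (congrFun h a), fun h => h ▸ rfl⟩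
  simp only [hiff] at h
  exact h

/-- The theorem of Diaconis and Shahshahani: for `m ≤ R` the power sums of a Haar unitary matrix
have the same moments of order `m` as independent complex Gaussians. -/
lemma integral_permTrace_mul_conj [μ.IsMulLeftInvariant] (hm : m ≤ R) (σ τ : Perm (Fin m)) :
    Integrable (fun θ : Matrix.unitaryGroup (Fin R) ℂ => permTrace σ (θ : Matrix (Fin R) (Fin R) ℂ) *
      starRingEnd ℂ (permTrace τ (θ : Matrix (Fin R) (Fin R) ℂ))) μ ∧
    ∫ θ : Matrix.unitaryGroup (Fin R) ℂ, permTrace σ (θ : Matrix (Fin R) (Fin R) ℂ) *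
      starRingEnd ℂ (permTrace τ (θ : Matrix (Fin R) (Fin R) ℂ)) ∂μ =
    ∑ π : Perm (Fin m), if π * σ * π⁻¹ = τ then 1 else 0 := by
  have hexp : (fun θ : Matrix.unitaryGroup (Fin R) ℂ =>
      permTrace σ (θ : Matrix (Fin R) (Fin R) ℂ) *
        starRingEnd ℂ (permTrace τ (θ : Matrix (Fin R) (Fin R) ℂ))) =
      fun θ => ∑ I : Fin m → Fin R, ∑ K : Fin m → Fin R,
        tensorCoeff I (I ∘ ⇑σ⁻¹) K (K ∘ ⇑τ⁻¹) θ := by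
    have hp : ∀ (σ : Perm (Fin m)) (θ : Matrix (Fin R) (Fin R) ℂ),
        permTrace σ θ = ∑ I : Fin m → Fin R, tensorPow m θ I (I ∘ ⇑σ⁻¹) := by
      intro σ θ
      refine Finset.sum_congr rfl fun I _ => ?_
      rw [← tensorPow_comp_perm θ I _ σ, Function.comp_assoc, ← Perm.coe_mul, inv_mul_cancel,
        Perm.coe_one, Function.comp_id]
      rfl
    funext θ
    rw [hp, hp, map_sum, Finset.sum_mul_sum]
    rfl
  rw [hexp]
  have hi1 : ∀ I : Fin m → Fin R, Integrable (fun θ => ∑ K : Fin m → Fin R,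
      tensorCoeff I (I ∘ ⇑σ⁻¹) K (K ∘ ⇑τ⁻¹) θ) μ := fun I =>
    integrable_finsetSum _ fun K _ => integrable_tensorCoeff μ _ _ _ _
  refine ⟨integrable_finsetSum _ fun I _ => hi1 I, ?_⟩
  rw [integral_finsetSum _ fun I _ => hi1 I]
  simp only [integral_finsetSum _ fun K _ => integrable_tensorCoeff μ _ _ _ _]
  have hw : ∀ I J K L : Fin m → Fin R, ∫ θ, tensorCoeff I J K L θ ∂μ =
      ∑ π : Perm (Fin m), if I = K ∘ π then
        ∫ θ, tensorCoeff (Fin.castLE hm ∘ π) J (Fin.castLE hm) L θ ∂μ else 0 := fun I J K L =>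
    commutant_apply hm (B := Matrix.of fun I K => ∫ θ, tensorCoeff I J K L θ ∂μ)
      (fun u hu => integral_tensorCoeff_commute μ J L hu) I K
  calc ∑ I : Fin m → Fin R, ∑ K : Fin m → Fin R,
        ∫ θ, tensorCoeff I (I ∘ ⇑σ⁻¹) K (K ∘ ⇑τ⁻¹) θ ∂μ
      = ∑ K : Fin m → Fin R, ∑ π : Perm (Fin m),
        ∫ θ, tensorCoeff (Fin.castLE hm ∘ π) (K ∘ π ∘ ⇑σ⁻¹) (Fin.castLE hm) (K ∘ ⇑τ⁻¹) θ ∂μ := by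
        rw [Finset.sum_comm]
        refine Finset.sum_congr rfl fun K _ => ?_
        simp only [hw _ _ K]
        rw [Finset.sum_comm]
        refine Finset.sum_congr rfl fun π _ => ?_
        rw [Finset.sum_ite_eq' Finset.univ (K ∘ π)]
        simp [Function.comp_assoc]
    _ = ∑ π : Perm (Fin m), ∫ θ, ∑ K : Fin m → Fin R,
        tensorCoeff (Fin.castLE hm ∘ ⇑(π * σ * π⁻¹)) K (Fin.castLE hm ∘ τ) K θ ∂μ := by
        rw [Finset.sum_comm]
        refine Finset.sum_congr rfl fun π _ => ?_
        rw [integral_finsetSum _ fun K _ => integrable_tensorCoeff μ _ _ _ _]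
        refine Finset.sum_congr rfl fun K _ => ?_
        congr 1
        funext θ
        simp only [tensorCoeff]
        rw [← tensorPow_comp_perm _ (Fin.castLE hm ∘ π) _ (σ * π⁻¹),
          ← tensorPow_comp_perm _ (Fin.castLE hm) _ τ]
        have h1 : (K ∘ π ∘ ⇑σ⁻¹) ∘ ⇑(σ * π⁻¹) = K := by funext a; simp
        have h2 : (K ∘ ⇑τ⁻¹) ∘ τ = K := by funext a; simp
        rw [h1, h2]
        rfl
    _ = _ := by
        refine Finset.sum_congr rfl fun π _ => ?_
        simp only [sum_tensorCoeff _ (Fin.castLE_injective hm)]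
        simp

end Haar

lemma card_fixed_conj {m k : ℕ} (σ π : Perm (Fin m)) :
    Fintype.card {f : Fin m → Fin k // f ∘ ⇑(π * σ * π⁻¹) = f} =
      Fintype.card {f : Fin m → Fin k // f ∘ σ = f} := by
  refine Fintype.card_congr (Equiv.subtypeEquiv (Equiv.arrowCongr π⁻¹ (Equiv.refl _)) fun f => ?_)
  have : (Equiv.arrowCongr π⁻¹ (Equiv.refl (Fin k))) f = f ∘ π := rfl
  rw [this]
  constructor
  · intro h
    nth_rw 2 [← h]
    funext a; simp
  · intro h
    funext a
    have := congrFun h (π⁻¹ a)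
    simpa using this

lemma card_fixed_sq {m k : ℕ} (σ : Perm (Fin m)) :
    Fintype.card {f : Fin m → Fin k // f ∘ σ = f} * Fintype.card {f : Fin m → Fin k // f ∘ σ = f} =
      Fintype.card {f : Fin m → Fin k × Fin k // f ∘ σ = f} := by
  rw [← Fintype.card_prod]
  refine Fintype.card_congr
    { toFun := fun p => ⟨fun a => (p.1.1 a, p.2.1 a), funext fun a =>
        Prod.ext (congrFun p.1.2 a) (congrFun p.2.2 a)⟩
      invFun := fun f => (⟨fun a => (f.1 a).1, funext fun a => congrArg Prod.fst (congrFun f.2 a)⟩,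
        ⟨fun a => (f.1 a).2, funext fun a => congrArg Prod.snd (congrFun f.2 a)⟩)
      left_inv := fun _ => rfl
      right_inv := fun _ => rfl }

lemma integral_norm_sq_coeff_det_pow {R m : ℕ} (k : ℕ)
    (μ : Measure (Matrix.unitaryGroup (Fin R) ℂ)) [IsProbabilityMeasure μ]
    [μ.IsMulLeftInvariant] (hm : m ≤ R) :
    ∫ θ : Matrix.unitaryGroup (Fin R) ℂ,
      ‖((Matrix.det (1 + (X : ℂ[X]) • (θ : Matrix (Fin R) (Fin R) ℂ).map C)) ^ k).coeff m‖ ^ 2 ∂μ =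
      ((k * k + m - 1).choose m : ℝ) := by
  set F : Matrix.unitaryGroup (Fin R) ℂ → ℂ := fun θ =>
    ((Matrix.det (1 + (X : ℂ[X]) • (θ : Matrix (Fin R) (Fin R) ℂ).map C)) ^ k).coeff m with hF
  let c : Perm (Fin m) → ℂ := fun σ =>
    ((Perm.sign σ : ℤ) : ℂ) * Fintype.card {f : Fin m → Fin k // f ∘ σ = f}
  have hcconj : ∀ σ, starRingEnd ℂ (c σ) = c σ := fun σ => by simp [c]
  have hcc : ∀ σ π : Perm (Fin m), c σ * c (π * σ * π⁻¹) =
      (Fintype.card {f : Fin m → Fin k × Fin k // f ∘ σ = f} : ℂ) := by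
    intro σ π
    have hs : Perm.sign (π * σ * π⁻¹) = Perm.sign σ := by
      rw [Perm.sign_mul, Perm.sign_mul, Perm.sign_inv, mul_right_comm, Int.units_mul_self, one_mul]
    have hss : ((Perm.sign σ : ℤ) : ℂ) * ((Perm.sign σ : ℤ) : ℂ) = 1 := by
      rw [← Int.cast_mul, ← Units.val_mul, Int.units_mul_self]; simp
    simp only [c]
    rw [card_fixed_conj, hs, ← card_fixed_sq, Nat.cast_mul, mul_mul_mul_comm, hss, one_mul]
  have hsq : ∀ θ, ((m.factorial : ℂ) * F θ) * starRingEnd ℂ ((m.factorial : ℂ) * F θ) =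
      ∑ σ : Perm (Fin m), ∑ τ : Perm (Fin m), c σ * c τ *
        (permTrace σ (θ : Matrix (Fin R) (Fin R) ℂ) *
          starRingEnd ℂ (permTrace τ (θ : Matrix (Fin R) (Fin R) ℂ))) := by
    intro θ
    simp only [hF]
    rw [factorial_mul_coeff_det_pow, map_sum, Finset.sum_mul_sum]
    refine Finset.sum_congr rfl fun σ _ => Finset.sum_congr rfl fun τ _ => ?_
    rw [← mul_assoc, ← mul_assoc, map_mul]
    change c σ * _ * (starRingEnd ℂ (c τ) * _) = _
    rw [hcconj]
    ring
  have hint := fun σ τ : Perm (Fin m) =>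
    ((integral_permTrace_mul_conj μ hm σ τ).1.const_mul (c σ * c τ))
  have hI : ∫ θ, ((m.factorial : ℂ) * F θ) * starRingEnd ℂ ((m.factorial : ℂ) * F θ) ∂μ =
      (m.factorial : ℂ) * ((k * k + m - 1).choose m * m.factorial : ℕ) := by
    simp only [hsq]
    rw [integral_finsetSum _ fun σ _ => integrable_finsetSum _ fun τ _ => hint σ τ]
    simp only [integral_finsetSum _ fun τ _ => hint _ τ, integral_const_mul,
      (integral_permTrace_mul_conj μ hm _ _).2]
    calc _ = ∑ σ : Perm (Fin m), ∑ π : Perm (Fin m), c σ * c (π * σ * π⁻¹) := by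
          refine Finset.sum_congr rfl fun σ _ => ?_
          simp only [Finset.mul_sum]
          rw [Finset.sum_comm]
          refine Finset.sum_congr rfl fun π _ => ?_
          simp
      _ = _ := by
          simp only [hcc, Finset.sum_const, nsmul_eq_mul]
          rw [← Finset.mul_sum, ← Nat.cast_sum, sum_card_comp_perm_eq, Finset.card_univ,
            Fintype.card_perm, Fintype.card_prod, Fintype.card_fin, Fintype.card_fin]
  have hne : (m.factorial : ℝ) ≠ 0 := by exact_mod_cast m.factorial_ne_zero
  have hnorm : ∀ θ, ((m.factorial : ℂ) * F θ) * starRingEnd ℂ ((m.factorial : ℂ) * F θ) =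
      (((m.factorial : ℝ) ^ 2 * ‖F θ‖ ^ 2 : ℝ) : ℂ) := by
    intro θ
    rw [Complex.mul_conj, Complex.normSq_eq_norm_sq, norm_mul, Complex.norm_natCast, mul_pow]
  simp only [hnorm] at hI
  rw [integral_complex_ofReal, integral_const_mul] at hI
  have hI' : (m.factorial : ℝ) ^ 2 * ∫ θ, ‖F θ‖ ^ 2 ∂μ =
      (m.factorial : ℝ) * (((k * k + m - 1).choose m * m.factorial : ℕ) : ℝ) := by
    exact_mod_cast hI
  push_cast at hI'
  refine mul_left_cancel₀ (pow_ne_zero 2 hne) (hI'.trans ?_)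
  ring

theorem I_k_eq_choose_of_large_n (k R n : ℕ) (hk : 1 ≤ k) (hR : 1 ≤ R)
    (h1 : (k - 1) * R < n) (h2 : n < k * R)
    (μ : Measure (Matrix.unitaryGroup (Fin R) ℂ))
    (hμ : μ.IsHaarMeasure) (hprob : IsProbabilityMeasure μ) :
    matrixIntegral k n R μ = Nat.choose (k * R - n + k ^ 2 - 1) (k ^ 2 - 1) := by
  have hm : k * R - n ≤ R := by
    have : (k - 1) * R + R = k * R := by
      rw [← Nat.succ_mul, Nat.succ_eq_add_one, Nat.sub_add_cancel hk]
    omega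
  have hcongr : matrixIntegral k n R μ = ∫ θ : Matrix.unitaryGroup (Fin R) ℂ,
      ‖((Matrix.det (1 + (X : ℂ[X]) • (θ : Matrix (Fin R) (Fin R) ℂ).map C)) ^ k).coeff
        (k * R - n)‖ ^ 2 ∂μ := by
    refine integral_congr_ae (Filter.Eventually.of_forall fun θ => ?_)
    simp only [extPowTrace]
    rw [← coeff_pow_eq_sum_antidiagonalTuple, norm_coeff_det_pow_eq θ h2.le]
  rw [hcongr, integral_norm_sq_coeff_det_pow k μ hm]
  have hk2 : 1 ≤ k ^ 2 := Nat.one_le_pow _ _ hk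
  congr 1
  rw [← pow_two, Nat.choose_symm_of_eq_add]
  · congr 1
    omega
  · omega
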